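/- The subspace of Σ_4-invariants of Q_9 is spanned by the classes of the four polynomials: q_1 = the sum of the 12 monomials obtained by assigning the exponents 7, 1, 1 to three distinct variables among x_1,...,x_4; q_2 = the sum of the 12 monomials obtained by assigning the exponents 1, 3, 5 to three distinct variables such that the variable carrying exponent 3 has smaller index than the variable carrying exponent 5; q_3 = the sum of the 4 monomials x_i^3x_j^3x_k^3 with 1 ≤ i < j < k ≤ 4; and q_4 = x_1x_2x_3x_4^6 + x_1x_2x_3^6x_4 + x_1x_2^6x_3x_4 + x_1^3x_2x_3x_4^4 + x_1^3x_2x_3^4x_4 + x_1^3x_2^4x_3x_4. -/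

import Mathlib

/-!
Common setup: the polynomial algebra `P_4 = F_2[x_1,x_2,x_3,x_4]` (variables `X 0, ..., X 3`),
the Steenrod action, hit polynomials, the cohit spaces `Q_n`, and the (induced) actions of
`GL_4(F_2)` and of the symmetric group `Σ_4` on `Q_n`.
-/

open MvPolynomial

noncomputable section

abbrev kk : Type := ZMod 2
abbrev P4 : Type := MvPolynomial (Fin 4) kk

/-- The total Steenrod square: the algebra endomorphism of `P4` with `X i ↦ X i + (X i)^2`.
For `g` homogeneous of degree `d`, `Sq^t g` is the degree-`d+t` homogeneous component
of `sqTotal g`. -/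
def sqTotal : P4 →ₐ[kk] P4 := aeval fun i => X i + X i ^ 2

/-- The homogeneous polynomials of degree `n`, i.e. `(P_4)_n`, as a submodule. -/
def homog (n : ℕ) : Submodule kk P4 := homogeneousSubmodule (Fin 4) kk n

/-- The subspace `H_n` of hit polynomials of degree `n`: it is spanned by the elements
`Sq^{n-d}(g) = (sqTotal g)_n` for `g` homogeneous of degree `d < n`, i.e. by all
`∑_{t>0} Sq^t(f_t)` with `f_t ∈ (P_4)_{n-t}`. -/
def hitSub (n : ℕ) : Submodule kk P4 :=
  Submodule.span kk
    {p | ∃ d, d < n ∧ ∃ g ∈ homog d, p = homogeneousComponent n (sqTotal g)}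

/-- The cohit space `Q_n = (P_4)_n / H_n`. -/
abbrev Qn (n : ℕ) :=
  ↥(homog n) ⧸ ((hitSub n).comap (homog n).subtype)

/-- Projection of a polynomial onto its degree-`n` part, landing in `homog n`. -/
def toHomog (n : ℕ) : P4 →ₗ[kk] homog n :=
  (homogeneousComponent n).codRestrict (homog n) fun f => homogeneousComponent_mem n f

/-- The class in `Q_n` of (the degree-`n` component of) a polynomial.  For `f`
homogeneous of degree `n` this is the class `[f]` of `f`. -/
def Qmk (n : ℕ) : P4 →ₗ[kk] Qn n :=
  ((hitSub n).comap (homog n).subtype).mkQ.comp (toHomog n)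

/-- Substitution action of a matrix `M`: the algebra endomorphism `X i ↦ ∑ j M i j • X j`. -/
def substM (M : Matrix (Fin 4) (Fin 4) kk) : P4 →ₐ[kk] P4 :=
  aeval fun i => ∑ j, M i j • X j

/-- The set of invertible `4 × 4` matrices over `F_2`, i.e. `GL_4(F_2)`. -/
def glSet : Set (Matrix (Fin 4) (Fin 4) kk) := {M | IsUnit M}

/-- The set of permutation matrices, i.e. `Σ_4 ⊆ GL_4(F_2)`. -/
def permSet : Set (Matrix (Fin 4) (Fin 4) kk) :=
  {M | ∃ σ : Equiv.Perm (Fin 4), M = σ.toPEquiv.toMatrix}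

/-- Homogeneous polynomials of degree `n` whose class in `Q_n` is invariant under every
element of `G` (the action on classes being induced by `substM`): for every `M ∈ G`,
`M·f - f` is hit. -/
def invPre (n : ℕ) (G : Set (Matrix (Fin 4) (Fin 4) kk)) : Submodule kk P4 :=
  homog n ⊓ ⨅ M ∈ G, (hitSub n).comap ((substM M).toLinearMap - LinearMap.id)

/-- The subspace `(Q_n)^G` of `G`-invariant classes in `Q_n`. -/
def QInv (n : ℕ) (G : Set (Matrix (Fin 4) (Fin 4) kk)) : Submodule kk (Qn n) :=
  (invPre n G).map (Qmk n)

/-- The `Σ_4`-submodule of `Q_n` generated by the classes of the polynomials in `S`: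
the span of the classes of all the permuted polynomials `σ · f`, `σ ∈ Σ_4`, `f ∈ S`. -/
def permSpan (n : ℕ) (S : Set P4) : Submodule kk (Qn n) :=
  Submodule.span kk
    {c | ∃ σ : Equiv.Perm (Fin 4), ∃ f ∈ S, c = Qmk n (rename (⇑σ) f)}

/-- `q₁`: the sum of the 12 monomials with exponents `7, 1, 1` on three distinct
variables. -/
def q11_1 : P4 :=
  ∑ i : Fin 4, ∑ j : Fin 4, ∑ l : Fin 4,
    if i ≠ j ∧ i ≠ l ∧ j ≠ l ∧ j < l then X i ^ 7 * X j * X l else 0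

/-- `q₂`: the sum of the 12 monomials with exponents `1, 3, 5` on three distinct variables,
the variable carrying `3` having smaller index than the variable carrying `5`. -/
def q11_2 : P4 :=
  ∑ i : Fin 4, ∑ j : Fin 4, ∑ l : Fin 4,
    if i ≠ j ∧ i ≠ l ∧ j ≠ l ∧ j < l then X i * X j ^ 3 * X l ^ 5 else 0

/-- `q₃`: the sum of the 4 monomials `x_i³x_j³x_k³`, `i < j < k`. -/
def q11_3 : P4 :=
  ∑ i : Fin 4, ∑ j : Fin 4, ∑ l : Fin 4,
    if i < j ∧ j < l then X i ^ 3 * X j ^ 3 * X l ^ 3 else 0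

/-- `q₄` (with `x_i = X (i-1)`). -/
def q11_4 : P4 :=
  X 0 * X 1 * X 2 * X 3 ^ 6 + X 0 * X 1 * X 2 ^ 6 * X 3 + X 0 * X 1 ^ 6 * X 2 * X 3 +
    X 0 ^ 3 * X 1 * X 2 * X 3 ^ 4 + X 0 ^ 3 * X 1 * X 2 ^ 4 * X 3 +
    X 0 ^ 3 * X 1 ^ 4 * X 2 * X 3

/-!
Modulo hit polynomials, a monomial of degree 9 with a single odd exponent vanishes: it is `x m²` for
a variable `x` and a monomial `m` of degree 4, and since `Sq (x + x² + x⁴) = x + x⁸`, it is the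
degree-9 part of `Sq ((x + x² + x⁴) m)`. The exponents with three odd entries are the permutations
of 7110, 3330, 1350, 1134, 1152, 1161 and 1233, and four families of hit polynomials leave 46 of
these monomials as generators of `Q_9`. They are independent: four functionals on degree 9 vanish
on hit polynomials, and their `Σ_4`-translates together determine the coefficients of a combination
of the 46 monomials. So a polynomial is hit exactly if all the translates vanish on it.

All translates of the `m`-th functional take the value `δ_{mn}` on `q_n`. Hence `q_n` is invariant
modulo hit polynomials, and an invariant class is the combination of the classes of the `q_m`
whose coefficients are the values of the four functionals.
-/

section Monomials

/-- The monomial `x^e`. Exponents are functions on `Fin 4` rather than finitely supported functions,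
so that finite statements about them are decidable by evaluation. -/
def mono (e : Fin 4 → ℕ) : P4 := monomial (Finsupp.equivFunOnFinite.symm e) 1

/-- The coefficient of `x^e`, as a linear functional. -/
def coeffAt (e : Fin 4 → ℕ) : P4 →ₗ[kk] kk := lcoeff kk (Finsupp.equivFunOnFinite.symm e)

theorem coeffAt_mono (e e' : Fin 4 → ℕ) : coeffAt e (mono e') = if e' = e then 1 else 0 := by
  simp [coeffAt, mono, lcoeff, coeff_monomial]

theorem mono_eq_prod (e : Fin 4 → ℕ) : mono e = ∏ i, X i ^ e i := by
  simp [mono, monomial_eq, Finsupp.prod_fintype]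

theorem mono_add (e e' : Fin 4 → ℕ) : mono (e + e') = mono e * mono e' := by
  simp [mono_eq_prod, pow_add, Finset.prod_mul_distrib]

theorem mono_single (i : Fin 4) (a : ℕ) : mono (Pi.single i a) = X i ^ a := by
  simp [mono_eq_prod, Pi.single_apply, pow_ite]

theorem ext_coeffAt {f g : P4} (h : ∀ e, coeffAt e f = coeffAt e g) : f = g := by
  ext d
  simpa [coeffAt] using h d

theorem mono_mem_homog (e : Fin 4 → ℕ) : mono e ∈ homog (∑ i, e i) :=
  isHomogeneous_monomial _ (by simp [Finsupp.degree_eq_sum])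

theorem coeffAt_homogeneousComponent (n : ℕ) (e : Fin 4 → ℕ) (f : P4) :
    coeffAt e (homogeneousComponent n f) = if ∑ i, e i = n then coeffAt e f else 0 := by
  simp [coeffAt, coeff_homogeneousComponent, Finsupp.degree_eq_sum]

theorem homogeneousComponent_eq_sum_mono (n : ℕ) (f : P4) :
    homogeneousComponent n f =
      ∑ e ∈ Finset.Nat.antidiagonalTuple 4 n, coeffAt e f • mono e := by
  refine ext_coeffAt fun e => ?_
  simp [coeffAt_homogeneousComponent, coeffAt_mono, Finset.Nat.mem_antidiagonalTuple]

theorem homogeneousComponent_of_mem_homog {n : ℕ} {f : P4} (hf : f ∈ homog n) :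
    homogeneousComponent n f = f :=
  homogeneousComponent_eq_self hf

theorem homog_le_of_mono_mem {n : ℕ} {N : Submodule kk P4}
    (h : ∀ e ∈ Finset.Nat.antidiagonalTuple 4 n, mono e ∈ N) : homog n ≤ N := by
  intro f hf
  rw [← homogeneousComponent_of_mem_homog hf, homogeneousComponent_eq_sum_mono]
  exact N.sum_mem fun e he => N.smul_mem _ (h e he)

theorem coeffAt_eq_zero_of_mem_span {S : Set (Fin 4 → ℕ)} {f : P4}
    (hf : f ∈ Submodule.span kk (mono '' S)) {e : Fin 4 → ℕ} (he : e ∉ S) : coeffAt e f = 0 := by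
  suffices Submodule.span kk (mono '' S) ≤ LinearMap.ker (coeffAt e) from this hf
  rw [Submodule.span_le]
  rintro _ ⟨e', he', rfl⟩
  simp [coeffAt_mono, ne_of_mem_of_not_mem he' he]

theorem rename_symm_mono (σ : Equiv.Perm (Fin 4)) (e : Fin 4 → ℕ) :
    rename σ.symm (mono e) = mono (e ∘ σ) := by
  simp [mono_eq_prod, ← Equiv.prod_comp σ fun i => (X (σ.symm i) : P4) ^ e i]

theorem coeffAt_rename (σ : Equiv.Perm (Fin 4)) (e : Fin 4 → ℕ) (f : P4) :
    coeffAt e (rename σ f) = coeffAt (e ∘ σ) f := by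
  have hd : Finsupp.equivFunOnFinite.symm e =
      (Finsupp.equivFunOnFinite.symm (e ∘ σ)).mapDomain σ := by
    ext i
    rw [← Finsupp.equivMapDomain_eq_mapDomain]
    simp
  simpa [coeffAt, lcoeff, hd] using coeff_rename_mapDomain σ σ.injective f _

end Monomials

section SteenrodSquares

/-- The coefficient of `x^e'` in the total square of `x^e`, see `coeffAt_sqTotal_mono`: the `i`-th
factor is the coefficient of `x^(e' i)` in `(x + x^2)^(e i)`. -/
def sqCoeff (e e' : Fin 4 → ℕ) : kk :=
  ∏ i, if e i ≤ e' i then ((e i).choose (e' i - e i) : kk) else 0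

theorem coeff_prod_aeval_X {σ R : Type*} [Fintype σ] [CommSemiring R] (p : σ → Polynomial R)
    (d : σ →₀ ℕ) : coeff d (∏ i, Polynomial.aeval (X i) (p i)) = ∏ i, (p i).coeff (d i) := by
  classical
  have h_monomial (x : σ → ℕ) : ∏ i, (p i).coeff (x i) • X (R := R) i ^ x i =
      monomial (Finsupp.equivFunOnFinite.symm x) (∏ i, (p i).coeff (x i)) := by
    simp [smul_eq_C_mul, Finset.prod_mul_distrib, monomial_eq, Finsupp.prod_fintype]
  simp only [Polynomial.aeval_eq_sum_range, Finset.prod_univ_sum, h_monomial, coeff_sum,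
    coeff_monomial, Equiv.symm_apply_eq, Finset.sum_ite_eq', Finsupp.equivFunOnFinite_apply]
  rw [ite_eq_left_iff, Fintype.mem_piFinset, not_forall]
  rintro ⟨i, hi⟩
  have h_deg : (p i).natDegree < d i := by simpa [Nat.lt_succ_iff] using hi
  exact (Finset.prod_eq_zero (Finset.mem_univ i)
    (Polynomial.coeff_eq_zero_of_natDegree_lt h_deg)).symm

theorem coeffAt_sqTotal_mono (e e' : Fin 4 → ℕ) :
    coeffAt e' (sqTotal (mono e)) = sqCoeff e e' := by
  have h_aeval : sqTotal (mono e) =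
      ∏ i, Polynomial.aeval (X i) ((Polynomial.X + Polynomial.X ^ 2 : Polynomial kk) ^ e i) := by
    simp [mono_eq_prod, sqTotal]
  have h_coeff (a b : ℕ) : ((Polynomial.X + Polynomial.X ^ 2 : Polynomial kk) ^ a).coeff b =
      if a ≤ b then (a.choose (b - a) : kk) else 0 := by
    rw [show (Polynomial.X + Polynomial.X ^ 2 : Polynomial kk) =
      Polynomial.X * (1 + Polynomial.X) by ring, mul_pow, Polynomial.coeff_X_pow_mul',
      Polynomial.coeff_one_add_X_pow]
  simp only [coeffAt, h_aeval, lcoeff_apply, coeff_prod_aeval_X, h_coeff, sqCoeff,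
    Finsupp.equivFunOnFinite_symm_apply_apply]

theorem le_of_sqCoeff_ne_zero {e e' : Fin 4 → ℕ} (h : sqCoeff e e' ≠ 0) (i : Fin 4) :
    e i ≤ e' i := by
  by_contra hi
  exact h (Finset.prod_eq_zero (Finset.mem_univ i) (if_neg hi))

theorem le_two_mul_of_sqCoeff_ne_zero {e e' : Fin 4 → ℕ} (h : sqCoeff e e' ≠ 0) (i : Fin 4) :
    e' i ≤ 2 * e i := by
  by_contra! hi
  refine h (Finset.prod_eq_zero (Finset.mem_univ i) ?_)
  rw [Nat.choose_eq_zero_of_lt (by lia), Nat.cast_zero, ite_self]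

theorem homogeneousComponent_sqTotal_mono_of_lt {n : ℕ} {e : Fin 4 → ℕ} (h : n < ∑ i, e i) :
    homogeneousComponent n (sqTotal (mono e)) = 0 := by
  refine ext_coeffAt fun e' => ?_
  rw [coeffAt_homogeneousComponent, coeffAt_sqTotal_mono, map_zero, ite_eq_right_iff]
  rintro rfl
  by_contra h0
  exact h.not_ge (Finset.sum_le_sum fun i _ => le_of_sqCoeff_ne_zero h0 i)

theorem homogeneousComponent_sqTotal_mono_two_mul (e : Fin 4 → ℕ) :
    homogeneousComponent (2 * ∑ i, e i) (sqTotal (mono e)) = mono e ^ 2 := by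
  have h_unique (e' : Fin 4 → ℕ) (h_deg : ∑ i, e' i = 2 * ∑ i, e i) (h : sqCoeff e e' ≠ 0) :
      e + e = e' := by
    rw [Finset.mul_sum] at h_deg
    have h_eq := (Finset.sum_eq_sum_iff_of_le
      fun i _ => le_two_mul_of_sqCoeff_ne_zero h i).1 h_deg
    funext i
    simp [h_eq i (Finset.mem_univ i), two_mul]
  refine ext_coeffAt fun e' => ?_
  rw [coeffAt_homogeneousComponent, coeffAt_sqTotal_mono, sq, ← mono_add, coeffAt_mono]
  by_cases he : e + e = e'
  · subst he
    simp [sqCoeff, Finset.sum_add_distrib, two_mul]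
  · rw [if_neg he, ite_eq_right_iff]
    exact fun h_deg => not_not.1 fun h => he (h_unique e' h_deg h)

section

attribute [local instance] MvPolynomial.gradedAlgebra

theorem homogeneousComponent_mul_of_isHomogeneous {σ R : Type*} [CommSemiring R] {d : ℕ}
    {p : MvPolynomial σ R} (hp : p.IsHomogeneous d) (n : ℕ) (q : MvPolynomial σ R) :
    homogeneousComponent n (p * q) = if d ≤ n then p * homogeneousComponent (n - d) q else 0 := by
  simp only [← decomposition.decompose'_apply]
  exact DirectSum.coe_decompose_mul_of_left_mem (homogeneousSubmodule σ R) n hp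

end

theorem rename_sqTotal (σ : Fin 4 → Fin 4) (f : P4) :
    rename σ (sqTotal f) = sqTotal (rename σ f) := by
  suffices (rename σ).comp sqTotal = sqTotal.comp (rename σ) from DFunLike.congr_fun this f
  ext i : 1
  simp [sqTotal]

end SteenrodSquares

section Hits

theorem homogeneousComponent_sqTotal_mem_hitSub {d n : ℕ} (h : d < n) {f : P4}
    (hf : f ∈ homog d) : homogeneousComponent n (sqTotal f) ∈ hitSub n :=
  Submodule.subset_span ⟨d, h, f, hf, rfl⟩

theorem hitSub_le_homog (n : ℕ) : hitSub n ≤ homog n := by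
  refine Submodule.span_le.2 ?_
  rintro _ ⟨d, -, g, -, rfl⟩
  exact homogeneousComponent_mem n _

theorem rename_mem_homog (σ : Fin 4 → Fin 4) {n : ℕ} {f : P4} (hf : f ∈ homog n) :
    rename σ f ∈ homog n :=
  IsHomogeneous.rename_isHomogeneous hf

theorem rename_mem_hitSub (σ : Equiv.Perm (Fin 4)) {n : ℕ} {f : P4} (hf : f ∈ hitSub n) :
    rename σ f ∈ hitSub n := by
  suffices hitSub n ≤ (hitSub n).comap (rename σ).toLinearMap from this hf
  refine Submodule.span_le.2 ?_
  rintro _ ⟨d, hd, g, hg, rfl⟩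
  have h := homogeneousComponent_sqTotal_mem_hitSub hd (rename_mem_homog σ hg)
  rwa [← rename_sqTotal, ← rename_homogeneousComponent] at h

theorem sqTotal_sum_X_pow_two_pow (i : Fin 4) (m : ℕ) :
    sqTotal (∑ j ∈ Finset.range m, X i ^ 2 ^ j) = X i + X i ^ 2 ^ m := by
  induction m with
  | zero => simp [CharTwo.add_self_eq_zero]
  | succ m ih =>
    rw [Finset.sum_range_succ, map_add, ih, map_pow, sqTotal, aeval_X, add_pow_char_pow, ← pow_mul,
      ← pow_succ', ← add_assoc, CharTwo.add_cancel_right]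

-- The sum `x + x² + x⁴ + ⋯ + x^(2^(m-1))` has total square `x + x^(2^m)`, and the second term only
-- contributes in degrees at least `2^m + ∑ e`.
theorem X_mul_mono_sq_mem_hitSub {m : ℕ} (i : Fin 4) (e : Fin 4 → ℕ)
    (hlt : ∑ j, e j + 1 < 2 ^ m) (hle : 2 ^ m ≤ 2 * ∑ j, e j) :
    X i * mono e ^ 2 ∈ hitSub (2 * ∑ j, e j + 1) := by
  have h_sum : homogeneousComponent (2 * ∑ j, e j + 1)
      (sqTotal ((∑ j ∈ Finset.range m, X i ^ 2 ^ j) * mono e)) = X i * mono e ^ 2 := by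
    rw [map_mul, sqTotal_sum_X_pow_two_pow, add_mul, map_add,
      homogeneousComponent_mul_of_isHomogeneous (isHomogeneous_X kk i),
      homogeneousComponent_mul_of_isHomogeneous (isHomogeneous_X_pow i (2 ^ m)),
      if_pos (by lia), Nat.add_sub_cancel, homogeneousComponent_sqTotal_mono_two_mul,
      homogeneousComponent_sqTotal_mono_of_lt (by lia), mul_zero, ite_self, add_zero]
  rw [← h_sum, Finset.sum_mul, map_sum, map_sum]
  refine Submodule.sum_mem _ fun j hj => ?_
  have h_pow : 2 * 2 ^ j ≤ 2 ^ m := by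
    rw [← pow_succ']
    exact Nat.pow_le_pow_right two_pos (Finset.mem_range.1 hj)
  exact homogeneousComponent_sqTotal_mem_hitSub (by lia)
    ((isHomogeneous_X_pow i (2 ^ j)).mul (mono_mem_homog e))

end Hits

section DegreeNine

/-- The number of odd exponents of `x^e`. In degree 9 it is 1 or 3, and in the first case `x^e` is
hit. -/
def numOdd (e : Fin 4 → ℕ) : ℕ := Finset.card {i | Odd (e i)}

theorem exists_eq_single_add_add_self {e : Fin 4 → ℕ} (h : numOdd e = 1) :
    ∃ i, ∃ e' : Fin 4 → ℕ, e = Pi.single i 1 + (e' + e') := by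
  obtain ⟨i, hi⟩ := Finset.card_eq_one.1 h
  refine ⟨i, fun j => e j / 2, funext fun j => ?_⟩
  have h_odd : Odd (e j) ↔ j = i := by simpa using Finset.ext_iff.1 hi j
  obtain rfl | hj := eq_or_ne j i
  · have := Nat.odd_iff.1 (h_odd.2 rfl)
    simp only [Pi.add_apply, Pi.single_eq_same]
    lia
  · have := Nat.not_odd_iff.1 (mt h_odd.1 hj)
    simp only [Pi.add_apply, Pi.single_eq_of_ne hj, zero_add]
    lia

theorem mono_mem_hitSub_of_numOdd_eq_one {e : Fin 4 → ℕ} (h_deg : ∑ i, e i = 9)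
    (h : numOdd e = 1) : mono e ∈ hitSub 9 := by
  obtain ⟨i, e, rfl⟩ := exists_eq_single_add_add_self h
  have h_half : ∑ j, e j = 4 := by
    simp only [Pi.add_apply, Finset.sum_add_distrib, Finset.sum_pi_single', Finset.mem_univ,
      if_true] at h_deg
    lia
  have h_mem := X_mul_mono_sq_mem_hitSub (m := 3) i e (by simp [h_half]) (by simp [h_half])
  rwa [h_half, sq, ← mono_add, ← pow_one (X i), ← mono_single, ← mono_add] at h_mem

/-- The exponents of the monomials of the degree-9 part of `sqTotal (mono e)`, except for those that
are hit because they have a single odd exponent. -/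
def sqExps (e : Fin 4 → ℕ) : Finset (Fin 4 → ℕ) :=
  {e' ∈ Finset.Nat.antidiagonalTuple 4 9 | numOdd e' ≠ 1 ∧ sqCoeff e e' ≠ 0}

theorem sum_mono_sqExps_mem_hitSub {e : Fin 4 → ℕ} (h : ∑ i, e i < 9) :
    ∑ e' ∈ sqExps e, mono e' ∈ hitSub 9 := by
  have h_sq := homogeneousComponent_sqTotal_mem_hitSub h (mono_mem_homog e)
  simp only [homogeneousComponent_eq_sum_mono, coeffAt_sqTotal_mono] at h_sq
  rw [← Finset.sum_filter_add_sum_filter_not _ (fun e' => numOdd e' = 1)] at h_sq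
  have h_odd : ∑ e' ∈ Finset.Nat.antidiagonalTuple 4 9 with numOdd e' = 1,
      sqCoeff e e' • mono e' ∈ hitSub 9 := by
    refine Submodule.sum_mem _ fun e' he' => Submodule.smul_mem _ _ ?_
    rw [Finset.mem_filter, Finset.Nat.mem_antidiagonalTuple] at he'
    exact mono_mem_hitSub_of_numOdd_eq_one he'.1 he'.2
  convert (Submodule.add_mem_iff_right _ h_odd).1 h_sq using 1
  rw [sqExps, ← Finset.filter_filter, Finset.sum_filter]
  refine Finset.sum_congr rfl fun e' _ => ?_
  obtain h0 | h1 : sqCoeff e e' = 0 ∨ sqCoeff e e' = 1 := by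
    generalize sqCoeff e e' = c
    revert c
    decide
  · simp [h0]
  · simp [h1]

theorem sum_mono_comp_sqExps_mem_hitSub {e : Fin 4 → ℕ} (h : ∑ i, e i < 9)
    (σ : Equiv.Perm (Fin 4)) : ∑ e' ∈ sqExps e, mono (e' ∘ σ) ∈ hitSub 9 := by
  have := rename_mem_hitSub σ.symm (sum_mono_sqExps_mem_hitSub h)
  simpa only [map_sum, rename_symm_mono] using this

theorem mono_1350_add_mono_1530_mem_hitSub (σ : Equiv.Perm (Fin 4)) :
    mono (![1, 3, 5, 0] ∘ σ) + mono (![1, 5, 3, 0] ∘ σ) ∈ hitSub 9 := by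
  have h_exps : sqExps ![1, 3, 3, 0] = {![1, 3, 5, 0], ![1, 5, 3, 0]} := by decide +kernel
  simpa [h_exps] using sum_mono_comp_sqExps_mem_hitSub (e := ![1, 3, 3, 0]) (by decide) σ

theorem mono_1134_add_mono_1152_mem_hitSub (σ : Equiv.Perm (Fin 4)) :
    mono (![1, 1, 3, 4] ∘ σ) + mono (![1, 1, 5, 2] ∘ σ) ∈ hitSub 9 := by
  have h_exps : sqExps ![1, 1, 3, 2] = {![1, 1, 3, 4], ![1, 1, 5, 2]} := by decide +kernel
  simpa [h_exps] using sum_mono_comp_sqExps_mem_hitSub (e := ![1, 1, 3, 2]) (by decide) σ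

theorem mono_1161_add_sum_mono_1152_mem_hitSub (σ : Equiv.Perm (Fin 4)) :
    mono (![1, 1, 6, 1] ∘ σ) + (mono (![2, 1, 5, 1] ∘ σ) + (mono (![1, 2, 5, 1] ∘ σ) +
      mono (![1, 1, 5, 2] ∘ σ))) ∈ hitSub 9 := by
  have h_exps : sqExps ![1, 1, 5, 1] =
      {![1, 1, 6, 1], ![2, 1, 5, 1], ![1, 2, 5, 1], ![1, 1, 5, 2]} := by decide +kernel
  simpa [h_exps] using sum_mono_comp_sqExps_mem_hitSub (e := ![1, 1, 5, 1]) (by decide) σ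

theorem mono_1233_add_mono_2133_add_mem_hitSub (σ : Equiv.Perm (Fin 4)) :
    mono (![1, 2, 3, 3] ∘ σ) + (mono (![2, 1, 3, 3] ∘ σ) + (mono (![1, 1, 4, 3] ∘ σ) +
      mono (![1, 1, 3, 4] ∘ σ))) ∈ hitSub 9 := by
  have h_exps : sqExps ![1, 1, 3, 3] =
      {![1, 2, 3, 3], ![2, 1, 3, 3], ![1, 1, 4, 3], ![1, 1, 3, 4]} := by decide +kernel
  simpa [h_exps] using sum_mono_comp_sqExps_mem_hitSub (e := ![1, 1, 3, 3]) (by decide) σ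

/-- The exponents of a monomial basis of `Q_9`: the four preceding families of hit polynomials
eliminate the permutations of 1152 and 1161, and one of two monomials for each pair of permuted
exponents 1350, 1530 and for each pair 1233, 2133. The entry `a` of the pattern stands at the
position `σ.symm a` of the exponent. -/
def IsNormal (e : Fin 4 → ℕ) : Prop :=
  ∃ σ : Equiv.Perm (Fin 4), e = ![7, 1, 1, 0] ∘ σ ∨ e = ![3, 3, 3, 0] ∘ σ ∨
    e = ![1, 1, 3, 4] ∘ σ ∨ (e = ![1, 3, 5, 0] ∘ σ ∧ σ.symm 1 < σ.symm 2) ∨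
    (e = ![1, 2, 3, 3] ∘ σ ∧ σ.symm 0 < σ.symm 1)

instance : DecidablePred IsNormal := fun _ => inferInstanceAs (Decidable (∃ _, _))

theorem exists_eq_pattern_comp : ∀ e ∈ Finset.Nat.antidiagonalTuple 4 9, numOdd e ≠ 1 →
    ∃ σ : Equiv.Perm (Fin 4), e = ![1, 1, 5, 2] ∘ σ ∨ e = ![1, 1, 6, 1] ∘ σ ∨
      (e = ![1, 5, 3, 0] ∘ σ ∧ IsNormal (![1, 3, 5, 0] ∘ σ)) ∨
      (e = ![1, 2, 3, 3] ∘ σ ∧ IsNormal (![2, 1, 3, 3] ∘ σ)) ∨ IsNormal e := by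
  decide +kernel

theorem homog_le_hitSub_sup_span_isNormal :
    homog 9 ≤ hitSub 9 ⊔ Submodule.span kk (mono '' {e | IsNormal e}) := by
  set N := hitSub 9 ⊔ Submodule.span kk (mono '' {e | IsNormal e})
  have h_hit {f : P4} (hf : f ∈ hitSub 9) : f ∈ N := Submodule.mem_sup_left hf
  have h_normal {e : Fin 4 → ℕ} (he : IsNormal e) : mono e ∈ N :=
    Submodule.mem_sup_right (Submodule.subset_span ⟨e, he, rfl⟩)
  have h_1134 (σ : Equiv.Perm (Fin 4)) : mono (![1, 1, 3, 4] ∘ σ) ∈ N :=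
    h_normal ⟨σ, by simp⟩
  have h_1143 (σ : Equiv.Perm (Fin 4)) : mono (![1, 1, 4, 3] ∘ σ) ∈ N := by
    convert h_1134 (Equiv.swap 2 3 * σ) using 2
    revert σ
    decide
  have h_1152 (σ : Equiv.Perm (Fin 4)) : mono (![1, 1, 5, 2] ∘ σ) ∈ N :=
    (N.add_mem_iff_right (h_1134 σ)).1 (h_hit (mono_1134_add_mono_1152_mem_hitSub σ))
  have h_2151 (σ : Equiv.Perm (Fin 4)) : mono (![2, 1, 5, 1] ∘ σ) ∈ N := by
    convert h_1152 (Equiv.swap 0 3 * σ) using 2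
    revert σ
    decide
  have h_1251 (σ : Equiv.Perm (Fin 4)) : mono (![1, 2, 5, 1] ∘ σ) ∈ N := by
    convert h_1152 (Equiv.swap 1 3 * σ) using 2
    revert σ
    decide
  refine homog_le_of_mono_mem fun e he => ?_
  by_cases h_odd : numOdd e = 1
  · exact h_hit (mono_mem_hitSub_of_numOdd_eq_one (Finset.Nat.mem_antidiagonalTuple.1 he) h_odd)
  obtain ⟨σ, rfl | rfl | ⟨rfl, hσ⟩ | ⟨rfl, hσ⟩ | h⟩ := exists_eq_pattern_comp e he h_odd
  · exact h_1152 σ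
  · exact (N.add_mem_iff_left (N.add_mem (h_2151 σ) (N.add_mem (h_1251 σ) (h_1152 σ)))).1
      (h_hit (mono_1161_add_sum_mono_1152_mem_hitSub σ))
  · exact (N.add_mem_iff_right (h_normal hσ)).1 (h_hit (mono_1350_add_mono_1530_mem_hitSub σ))
  · exact (N.add_mem_iff_left (N.add_mem (h_normal hσ) (N.add_mem (h_1143 σ) (h_1134 σ)))).1
      (h_hit (mono_1233_add_mono_2133_add_mem_hitSub σ))
  · exact h_normal h

/-- The supports of four functionals on degree 9 that vanish on hit polynomials and whose
`Σ_4`-translates span the dual of `Q_9`. -/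
def detectingExps : Fin 4 → Finset (Fin 4 → ℕ) :=
  ![{![7, 1, 1, 0]}, {![1, 3, 5, 0], ![1, 5, 3, 0]}, {![3, 3, 3, 0]},
    {![1, 2, 3, 3], ![1, 1, 3, 4], ![1, 1, 5, 2], ![1, 1, 6, 1]}]

/-- The functional on degree 9 with support `detectingExps m`. -/
def detect (m : Fin 4) : P4 →ₗ[kk] kk := ∑ e ∈ detectingExps m, coeffAt e

theorem detect_rename (m : Fin 4) (σ : Equiv.Perm (Fin 4)) (f : P4) :
    detect m (rename σ f) = ∑ e ∈ detectingExps m, coeffAt (e ∘ σ) f := by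
  simp [detect, coeffAt_rename]

theorem detect_eq_zero_of_mem_hitSub (m : Fin 4) {f : P4} (hf : f ∈ hitSub 9) :
    detect m f = 0 := by
  have h_cycle : ∀ m, ∀ d < 9, ∀ e ∈ Finset.Nat.antidiagonalTuple 4 d,
      ∑ e' ∈ detectingExps m, sqCoeff e e' = 0 := by
    decide +kernel
  have h_deg : ∀ m, ∀ e ∈ detectingExps m, ∑ i, e i = 9 := by decide
  suffices hitSub 9 ≤ LinearMap.ker (detect m) from this hf
  refine Submodule.span_le.2 ?_
  rintro _ ⟨d, hd, g, hg, rfl⟩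
  suffices homog d ≤ LinearMap.ker
    (detect m ∘ₗ homogeneousComponent 9 ∘ₗ sqTotal.toLinearMap) from this hg
  refine homog_le_of_mono_mem fun e he => ?_
  rw [LinearMap.mem_ker, ← h_cycle m d hd e he]
  simp only [detect, LinearMap.comp_apply, LinearMap.sum_apply, AlgHom.toLinearMap_apply]
  refine Finset.sum_congr rfl fun e' he' => ?_
  rw [coeffAt_homogeneousComponent, if_pos (h_deg m e' he'), coeffAt_sqTotal_mono]

theorem not_isNormal_1152_comp : ∀ σ : Equiv.Perm (Fin 4), ¬IsNormal (![1, 1, 5, 2] ∘ σ) := by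
  decide +kernel

theorem not_isNormal_1161_comp : ∀ σ : Equiv.Perm (Fin 4), ¬IsNormal (![1, 1, 6, 1] ∘ σ) := by
  decide +kernel

theorem not_isNormal_1530_comp : ∀ σ : Equiv.Perm (Fin 4), σ.symm 1 < σ.symm 2 →
    ¬IsNormal (![1, 5, 3, 0] ∘ σ) := by
  decide +kernel

theorem exists_1134_comp_eq_and_not_isNormal_1233_comp : ∀ σ : Equiv.Perm (Fin 4),
    ∃ τ : Equiv.Perm (Fin 4), ![1, 1, 3, 4] ∘ σ = ![1, 1, 3, 4] ∘ τ ∧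
      ¬IsNormal (![1, 2, 3, 3] ∘ τ) := by
  decide +kernel

theorem eq_zero_of_mem_span_isNormal_of_detect_rename_eq_zero {f : P4}
    (hf : f ∈ Submodule.span kk (mono '' {e | IsNormal e}))
    (h : ∀ m (σ : Equiv.Perm (Fin 4)), detect m (rename σ f) = 0) : f = 0 := by
  have h_off {e : Fin 4 → ℕ} (he : ¬IsNormal e) : coeffAt e f = 0 :=
    coeffAt_eq_zero_of_mem_span hf he
  have h_711 (σ : Equiv.Perm (Fin 4)) : coeffAt (![7, 1, 1, 0] ∘ σ) f = 0 := by
    simpa [detect_rename, detectingExps] using h 0 σ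
  have h_135 (σ : Equiv.Perm (Fin 4)) :
      coeffAt (![1, 3, 5, 0] ∘ σ) f + coeffAt (![1, 5, 3, 0] ∘ σ) f = 0 := by
    simpa [detect_rename, detectingExps] using h 1 σ
  have h_333 (σ : Equiv.Perm (Fin 4)) : coeffAt (![3, 3, 3, 0] ∘ σ) f = 0 := by
    simpa [detect_rename, detectingExps] using h 2 σ
  have h_1233 (σ : Equiv.Perm (Fin 4)) :
      coeffAt (![1, 2, 3, 3] ∘ σ) f + coeffAt (![1, 1, 3, 4] ∘ σ) f = 0 := by
    simpa [detect_rename, detectingExps, h_off (not_isNormal_1152_comp σ),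
      h_off (not_isNormal_1161_comp σ)] using h 3 σ
  have h_1134 (σ : Equiv.Perm (Fin 4)) : coeffAt (![1, 1, 3, 4] ∘ σ) f = 0 := by
    obtain ⟨τ, hτ, h_not⟩ := exists_1134_comp_eq_and_not_isNormal_1233_comp σ
    simpa [hτ, h_off h_not] using h_1233 τ
  refine ext_coeffAt fun e => ?_
  by_cases he : IsNormal e
  · obtain ⟨σ, rfl | rfl | rfl | ⟨rfl, hσ⟩ | ⟨rfl, -⟩⟩ := he
    · exact h_711 σ
    · exact h_333 σ
    · exact h_1134 σ
    · simpa [h_off (not_isNormal_1530_comp σ hσ)] using h_135 σ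
    · simpa [h_1134] using h_1233 σ
  · exact h_off he

theorem mem_hitSub_iff_detect_rename_eq_zero {f : P4} (hf : f ∈ homog 9) :
    f ∈ hitSub 9 ↔ ∀ m (σ : Equiv.Perm (Fin 4)), detect m (rename σ f) = 0 := by
  refine ⟨fun h m σ => detect_eq_zero_of_mem_hitSub m (rename_mem_hitSub σ h), fun h => ?_⟩
  obtain ⟨p, hp, g, hg, rfl⟩ := Submodule.mem_sup.1 (homog_le_hitSub_sup_span_isNormal hf)
  have h_zero : g = 0 := by
    refine eq_zero_of_mem_span_isNormal_of_detect_rename_eq_zero hg fun m σ => ?_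
    simpa [detect_eq_zero_of_mem_hitSub m (rename_mem_hitSub σ hp)] using h m σ
  rwa [h_zero, add_zero]

end DegreeNine

section Invariants

/-- The exponents `a`, `b`, `c` at the positions `i`, `j`, `l` that satisfy `P i j l`. -/
def tripleExps (a b c : ℕ) (P : Fin 4 → Fin 4 → Fin 4 → Prop) [∀ i j l, Decidable (P i j l)] :
    Finset (Fin 4 → ℕ) :=
  Finset.image (fun p => Pi.single p.1 a + Pi.single p.2.1 b + Pi.single p.2.2 c)
    {p : Fin 4 × Fin 4 × Fin 4 | P p.1 p.2.1 p.2.2}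

theorem sum_mono_tripleExps {a b c : ℕ} {P : Fin 4 → Fin 4 → Fin 4 → Prop}
    [∀ i j l, Decidable (P i j l)]
    (h_inj : Set.InjOn
      (fun p => (Pi.single p.1 a + Pi.single p.2.1 b + Pi.single p.2.2 c : Fin 4 → ℕ))
      {p : Fin 4 × Fin 4 × Fin 4 | P p.1 p.2.1 p.2.2}) :
    ∑ e ∈ tripleExps a b c P, mono e =
      ∑ i, ∑ j, ∑ l, if P i j l then X i ^ a * X j ^ b * X l ^ c else 0 := by
  rw [tripleExps, Finset.sum_image (by simpa using h_inj), Finset.sum_filter]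
  simp only [Fintype.sum_prod_type, mono_add, mono_single]

/-- The exponents of the monomials of `q₁,…,q₄`. -/
def qExps : Fin 4 → Finset (Fin 4 → ℕ) :=
  ![tripleExps 7 1 1 fun i j l => i ≠ j ∧ i ≠ l ∧ j ≠ l ∧ j < l,
    tripleExps 1 3 5 fun i j l => i ≠ j ∧ i ≠ l ∧ j ≠ l ∧ j < l,
    tripleExps 3 3 3 fun i j l => i < j ∧ j < l,
    {![1, 1, 1, 6], ![1, 1, 6, 1], ![1, 6, 1, 1], ![3, 1, 1, 4], ![3, 1, 4, 1], ![3, 4, 1, 1]}]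

/-- The polynomials `q₁,…,q₄` as a family. -/
def q : Fin 4 → P4 := ![q11_1, q11_2, q11_3, q11_4]

theorem q_eq_sum_mono (m : Fin 4) : q m = ∑ e ∈ qExps m, mono e := by
  have h_711 : q11_1 = ∑ e ∈ qExps 0, mono e := by
    simp only [qExps, Matrix.cons_val]
    rw [sum_mono_tripleExps (by unfold Set.InjOn; decide +kernel), q11_1]
    simp only [pow_one]
  have h_135 : q11_2 = ∑ e ∈ qExps 1, mono e := by
    simp only [qExps, Matrix.cons_val]
    rw [sum_mono_tripleExps (by unfold Set.InjOn; decide +kernel), q11_2]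
    simp only [pow_one]
  have h_333 : q11_3 = ∑ e ∈ qExps 2, mono e := by
    simp only [qExps, Matrix.cons_val]
    rw [sum_mono_tripleExps (by unfold Set.InjOn; decide +kernel), q11_3]
  have h_q4 : q11_4 = ∑ e ∈ qExps 3, mono e := by
    simp [q11_4, qExps, mono_eq_prod, Fin.prod_univ_four, ← add_assoc]
  fin_cases m
  exacts [h_711, h_135, h_333, h_q4]

theorem q_mem_homog (m : Fin 4) : q m ∈ homog 9 := by
  have h_deg : ∀ m, ∀ e ∈ qExps m, ∑ i, e i = 9 := by decide +kernel
  rw [q_eq_sum_mono]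
  exact Submodule.sum_mem _ fun e he => h_deg m e he ▸ mono_mem_homog e

theorem detect_rename_q (m n : Fin 4) (σ : Equiv.Perm (Fin 4)) :
    detect m (rename σ (q n)) = if m = n then 1 else 0 := by
  have h_count : ∀ m n : Fin 4, ∀ σ : Equiv.Perm (Fin 4),
      ∑ e' ∈ qExps n, ∑ e ∈ detectingExps m, (if e' = e ∘ σ then 1 else 0 : kk) =
        if m = n then 1 else 0 := by
    decide +kernel
  simp only [detect_rename, q_eq_sum_mono, map_sum, coeffAt_mono, h_count]

theorem substM_toPEquiv_toMatrix (σ : Equiv.Perm (Fin 4)) :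
    substM σ.toPEquiv.toMatrix = rename σ := by
  ext i : 1
  simp [substM, PEquiv.toMatrix_apply]

theorem mem_invPre_permSet_iff {n : ℕ} {f : P4} :
    f ∈ invPre n permSet ↔
      f ∈ homog n ∧ ∀ σ : Equiv.Perm (Fin 4), rename σ f - f ∈ hitSub n := by
  simp [invPre, permSet, substM_toPEquiv_toMatrix]

theorem Qmk_eq_zero_of_mem_hitSub {n : ℕ} {f : P4} (hf : f ∈ hitSub n) : Qmk n f = 0 := by
  rw [Qmk, LinearMap.comp_apply, Submodule.mkQ_apply, Submodule.Quotient.mk_eq_zero]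
  change homogeneousComponent n f ∈ hitSub n
  rwa [homogeneousComponent_of_mem_homog (hitSub_le_homog n hf)]

theorem q_mem_invPre (m : Fin 4) : q m ∈ invPre 9 permSet := by
  refine mem_invPre_permSet_iff.2 ⟨q_mem_homog m, fun σ => ?_⟩
  have h_homog := sub_mem (rename_mem_homog σ (q_mem_homog m)) (q_mem_homog m)
  refine (mem_hitSub_iff_detect_rename_eq_zero h_homog).2 fun n τ => ?_
  have h_comp : rename τ (rename σ (q m)) = rename (σ.trans τ) (q m) := rename_rename σ τ (q m)
  rw [map_sub, map_sub, h_comp, detect_rename_q, detect_rename_q, sub_self]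

theorem sub_sum_detect_smul_q_mem_hitSub {f : P4} (hf : f ∈ invPre 9 permSet) :
    f - ∑ m, detect m f • q m ∈ hitSub 9 := by
  obtain ⟨h_homog, h_inv⟩ := mem_invPre_permSet_iff.1 hf
  have h_sum : ∑ m, detect m f • q m ∈ homog 9 :=
    sum_mem fun m _ => Submodule.smul_mem _ _ (q_mem_homog m)
  refine (mem_hitSub_iff_detect_rename_eq_zero (sub_mem h_homog h_sum)).2 fun m σ => ?_
  simpa [detect_rename_q] using detect_eq_zero_of_mem_hitSub m (h_inv σ)

end Invariants

/-- The subspace of `Σ_4`-invariants of `Q_9` is spanned by the classes of `q₁,…,q₄`. -/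
theorem statement_11 :
    QInv 9 permSet =
      Submodule.span kk {Qmk 9 q11_1, Qmk 9 q11_2, Qmk 9 q11_3, Qmk 9 q11_4} := by
  have h_range : {Qmk 9 q11_1, Qmk 9 q11_2, Qmk 9 q11_3, Qmk 9 q11_4} =
      Set.range fun m => Qmk 9 (q m) := by
    ext
    simp [q, Fin.exists_fin_succ, eq_comm]
  rw [h_range]
  refine le_antisymm ?_ (Submodule.span_le.2 ?_)
  · rintro _ ⟨f, hf, rfl⟩
    have h_zero := Qmk_eq_zero_of_mem_hitSub (sub_sum_detect_smul_q_mem_hitSub hf)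
    simp only [map_sub, map_sum, map_smul, sub_eq_zero] at h_zero
    rw [h_zero]
    exact sum_mem fun m _ => Submodule.smul_mem _ _ (Submodule.subset_span ⟨m, rfl⟩)
  · rintro _ ⟨m, rfl⟩
    exact Submodule.mem_map_of_mem (q_mem_invPre m)

end
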